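/- For any u, v ∈ Λ₂, the function t ↦ E((1 − t)u + t v) is concave on [0,1]: it is a quadratic polynomial in t whose leading coefficient equals −μ √(π/τ) Σ_{i=1}^n ∫_Ω (v_i − u_i)(G_τ * (v_i − u_i)) dx ≤ 0. In particular, the ICTM energy E is a concave functional on the convex set Λ₂. -/

import Mathlib

/-!
Write `B f g = ∫ f (G_τ * g)`. Since `G_τ` is bounded and continuous, `B` is a bilinear form on
integrable functions, so along a segment `u + t w`, `w = v - u`, the energy is a quadratic
polynomial in `t` with leading coefficient `μ √(π/τ) ∑ᵢ ∑_{j≠i} B wᵢ wⱼ`. As `∑ⱼ wⱼ = 0` a.e., the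
full double sum `∑ᵢ ∑ⱼ B wᵢ wⱼ` vanishes and the coefficient is `-μ √(π/τ) ∑ᵢ B wᵢ wᵢ`.

Its sign comes from `gaussB_self_nonneg`. With `h z = exp (-‖z‖² / (2τ))`, the parallelogram law
gives the semigroup identity `∫ h (x - z) h (y - z) dz = K G_τ (x - y)` for some `K > 0`
(`exists_gauss_semigroup`), and two applications of Fubini's theorem turn `K * B f f` into
`∫ (∫ h (y - z) f y dy)² dz ≥ 0`. A quadratic polynomial with nonpositive leading coefficient
is concave, and concavity on `Λ₂` is concavity along its segments.
-/

open MeasureTheory Real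

noncomputable section

/-- The two-dimensional Gaussian (heat) kernel `G_τ(x) = (4πτ)⁻¹ exp(-|x|²/(4τ))`. -/
def gauss (τ : ℝ) (x : EuclideanSpace ℝ (Fin 2)) : ℝ :=
  (4 * π * τ)⁻¹ * Real.exp (-‖x‖ ^ 2 / (4 * τ))

/-- Convolution on `ℝ²`: `(k * v)(x) = ∫ k(x - y) v(y) dy`. -/
def gconv (k v : EuclideanSpace ℝ (Fin 2) → ℝ) (x : EuclideanSpace ℝ (Fin 2)) : ℝ :=
  ∫ y, k (x - y) * v y

/-- Membership in `Λ₁`: measurable functions `u = (u₁, …, uₙ)`, extended by zero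
outside `Ω`, with `uᵢ(x) ∈ {0,1}` and `∑ᵢ uᵢ(x) = 1` for a.e. `x ∈ Ω`. -/
def InLambda1 {n : ℕ} (Ω : Set (EuclideanSpace ℝ (Fin 2)))
    (u : Fin n → EuclideanSpace ℝ (Fin 2) → ℝ) : Prop :=
  (∀ i, Measurable (u i)) ∧ (∀ i, ∀ x, x ∉ Ω → u i x = 0) ∧
  (∀ᵐ x ∂(volume.restrict Ω), (∀ i, u i x = 0 ∨ u i x = 1) ∧ (∑ i, u i x) = 1)

/-- Membership in `Λ₂` (the convex relaxation of `Λ₁`): measurable functions,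
extended by zero outside `Ω`, with `uᵢ(x) ∈ [0,1]` and `∑ᵢ uᵢ(x) = 1` a.e. on `Ω`. -/
def InLambda2 {n : ℕ} (Ω : Set (EuclideanSpace ℝ (Fin 2)))
    (u : Fin n → EuclideanSpace ℝ (Fin 2) → ℝ) : Prop :=
  (∀ i, Measurable (u i)) ∧ (∀ i, ∀ x, x ∉ Ω → u i x = 0) ∧
  (∀ᵐ x ∂(volume.restrict Ω), (∀ i, u i x ∈ Set.Icc (0 : ℝ) 1) ∧ (∑ i, u i x) = 1)

/-- The ICTM segmentation energy
`E(u) = ∑ᵢ λᵢ ∫_Ω uᵢ eᵢ + μ √(π/τ) ∑ᵢ ∑_{j≠i} ∫_Ω uᵢ (G_τ * uⱼ)`. -/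
def ictmEnergy {n : ℕ} (Ω : Set (EuclideanSpace ℝ (Fin 2))) (τ μ : ℝ)
    (lam : Fin n → ℝ) (e u : Fin n → EuclideanSpace ℝ (Fin 2) → ℝ) : ℝ :=
  (∑ i, lam i * ∫ x in Ω, u i x * e i x) +
    μ * Real.sqrt (π / τ) *
      ∑ i, ∑ j ∈ Finset.univ.erase i, ∫ x in Ω, u i x * gconv (gauss τ) (u j) x

/-! ### The Gaussian bilinear form -/

/-- The bilinear form `∫ f (G_τ * g)` over the whole plane. -/
def gaussB (τ : ℝ) (f g : EuclideanSpace ℝ (Fin 2) → ℝ) : ℝ :=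
  ∫ x, f x * gconv (gauss τ) g x

lemma continuous_gauss (τ : ℝ) : Continuous (gauss τ) := by
  unfold gauss
  fun_prop

lemma norm_gauss_le {τ : ℝ} (hτ : 0 < τ) (x : EuclideanSpace ℝ (Fin 2)) :
    ‖gauss τ x‖ ≤ (4 * π * τ)⁻¹ := by
  have hc : 0 ≤ (4 * π * τ)⁻¹ := by positivity
  unfold gauss
  rw [norm_mul, Real.norm_of_nonneg hc, Real.norm_of_nonneg (Real.exp_pos _).le]
  refine mul_le_of_le_one_right hc (Real.exp_le_one_iff.2 ?_)
  exact div_nonpos_of_nonpos_of_nonneg (by simp) (by positivity)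

lemma integrable_gauss_mul {τ : ℝ} (hτ : 0 < τ) {f : EuclideanSpace ℝ (Fin 2) → ℝ}
    (hf : Integrable f) (x : EuclideanSpace ℝ (Fin 2)) :
    Integrable (fun y => gauss τ (x - y) * f y) := by
  refine hf.bdd_mul (c := (4 * π * τ)⁻¹) ?_ (ae_of_all _ fun y => norm_gauss_le hτ _)
  exact ((continuous_gauss τ).comp (by fun_prop)).aestronglyMeasurable

lemma integrable_mul_gconv {τ : ℝ} (hτ : 0 < τ) {f g : EuclideanSpace ℝ (Fin 2) → ℝ}
    (hf : Integrable f) (hg : Integrable g) :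
    Integrable (fun x => f x * gconv (gauss τ) g x) := by
  have h : Integrable (fun p : EuclideanSpace ℝ (Fin 2) × EuclideanSpace ℝ (Fin 2) =>
      gauss τ (p.1 - p.2) * (f p.1 * g p.2)) (volume.prod volume) := by
    refine (hf.mul_prod hg).bdd_mul (c := (4 * π * τ)⁻¹) ?_
      (ae_of_all _ fun y => norm_gauss_le hτ _)
    exact ((continuous_gauss τ).comp (by fun_prop)).aestronglyMeasurable
  refine h.integral_prod_left.congr (ae_of_all _ fun x => ?_)
  simp only [gconv, ← integral_const_mul]
  congr 1; ext y; ring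

lemma gconv_add_smul {τ : ℝ} (hτ : 0 < τ) {g k : EuclideanSpace ℝ (Fin 2) → ℝ}
    (hg : Integrable g) (hk : Integrable k) (t : ℝ) (x : EuclideanSpace ℝ (Fin 2)) :
    gconv (gauss τ) (fun y => g y + t * k y) x =
      gconv (gauss τ) g x + t * gconv (gauss τ) k x := by
  unfold gconv
  rw [← integral_const_mul, ← integral_add (integrable_gauss_mul hτ hg x)
    ((integrable_gauss_mul hτ hk x).const_mul t)]
  congr 1; ext y; ring

lemma gaussB_add_smul_left {τ : ℝ} (hτ : 0 < τ) {f g k : EuclideanSpace ℝ (Fin 2) → ℝ}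
    (hf : Integrable f) (hg : Integrable g) (hk : Integrable k) (t : ℝ) :
    gaussB τ (fun x => f x + t * g x) k = gaussB τ f k + t * gaussB τ g k := by
  unfold gaussB
  rw [← integral_const_mul, ← integral_add (integrable_mul_gconv hτ hf hk)
    ((integrable_mul_gconv hτ hg hk).const_mul t)]
  congr 1; ext y; ring

lemma gaussB_add_smul_right {τ : ℝ} (hτ : 0 < τ) {f g k : EuclideanSpace ℝ (Fin 2) → ℝ}
    (hf : Integrable f) (hg : Integrable g) (hk : Integrable k) (t : ℝ) :
    gaussB τ f (fun x => g x + t * k x) = gaussB τ f g + t * gaussB τ f k := by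
  unfold gaussB
  rw [← integral_const_mul, ← integral_add (integrable_mul_gconv hτ hf hg)
    ((integrable_mul_gconv hτ hf hk).const_mul t)]
  congr 1; ext y
  rw [gconv_add_smul hτ hg hk]; ring

lemma gaussB_sum_right {n : ℕ} {τ : ℝ} (hτ : 0 < τ) {f : EuclideanSpace ℝ (Fin 2) → ℝ}
    {w : Fin n → EuclideanSpace ℝ (Fin 2) → ℝ} (hf : Integrable f)
    (hw : ∀ i, Integrable (w i)) :
    ∑ j, gaussB τ f (w j) = gaussB τ f (fun x => ∑ j, w j x) := by
  unfold gaussB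
  rw [← integral_finsetSum _ fun j _ => integrable_mul_gconv hτ hf (hw j)]
  congr 1; ext x
  rw [← Finset.mul_sum]
  unfold gconv
  rw [← integral_finsetSum _ fun j _ => integrable_gauss_mul hτ (hw j) x]
  simp_rw [Finset.mul_sum]

lemma gaussB_eq_zero_of_ae (τ : ℝ) (f : EuclideanSpace ℝ (Fin 2) → ℝ)
    {g : EuclideanSpace ℝ (Fin 2) → ℝ} (hg : g =ᵐ[volume] 0) : gaussB τ f g = 0 := by
  have h : ∀ x, gconv (gauss τ) g x = 0 := fun x => by
    refine integral_eq_zero_of_ae ?_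
    filter_upwards [hg] with y hy
    simp [hy]
  simp [gaussB, h]

/-! ### Positivity of the quadratic form -/

/-- The semigroup property `G_{τ/2} * G_{τ/2} = G_τ`, up to normalising constants. -/
lemma exists_gauss_semigroup {τ : ℝ} (hτ : 0 < τ) :
    ∃ K : ℝ, 0 < K ∧ ∀ x y : EuclideanSpace ℝ (Fin 2),
      ∫ z, Real.exp (-(2 * τ)⁻¹ * ‖x - z‖ ^ 2) * Real.exp (-(2 * τ)⁻¹ * ‖y - z‖ ^ 2) =
        K * gauss τ (x - y) := by
  have hI : 0 < ∫ z : EuclideanSpace ℝ (Fin 2), Real.exp (-τ⁻¹ * ‖z‖ ^ 2) := by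
    rw [GaussianFourier.integral_rexp_neg_mul_sq_norm (by positivity)]
    positivity
  refine ⟨(4 * π * τ) * ∫ z : EuclideanSpace ℝ (Fin 2), Real.exp (-τ⁻¹ * ‖z‖ ^ 2),
    by positivity, fun x y => ?_⟩
  have hpt : ∀ z, Real.exp (-(2 * τ)⁻¹ * ‖x - z‖ ^ 2) * Real.exp (-(2 * τ)⁻¹ * ‖y - z‖ ^ 2) =
      Real.exp (-‖x - y‖ ^ 2 / (4 * τ)) *
        Real.exp (-τ⁻¹ * ‖z - (2⁻¹ : ℝ) • (x + y)‖ ^ 2) := fun z => by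
    rw [← Real.exp_add, ← Real.exp_add]
    congr 1
    -- the parallelogram law for `x - z` and `y - z`
    have hp := parallelogram_law_with_norm ℝ (x - z) (y - z)
    have h1 : ‖x - z + (y - z)‖ = 2 * ‖z - (2⁻¹ : ℝ) • (x + y)‖ := by
      have : x - z + (y - z) = (-2 : ℝ) • (z - (2⁻¹ : ℝ) • (x + y)) := by module
      rw [this, norm_smul]; norm_num
    have h2 : x - z - (y - z) = x - y := by abel
    rw [h1, h2] at hp
    field_simp
    nlinarith
  simp_rw [hpt]
  rw [integral_const_mul,
    integral_sub_right_eq_self (fun z => Real.exp (-τ⁻¹ * ‖z‖ ^ 2)) ((2⁻¹ : ℝ) • (x + y)), gauss]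
  field_simp

/-- Positivity of the Gaussian quadratic form. -/
lemma gaussB_self_nonneg {τ : ℝ} (hτ : 0 < τ) {f : EuclideanSpace ℝ (Fin 2) → ℝ}
    (hf : Integrable f) : 0 ≤ gaussB τ f f := by
  obtain ⟨K, hK, hsg⟩ := exists_gauss_semigroup hτ
  set h : EuclideanSpace ℝ (Fin 2) → ℝ := fun z => Real.exp (-(2 * τ)⁻¹ * ‖z‖ ^ 2) with hh
  have hc : Continuous h := by rw [hh]; fun_prop
  have hb : ∀ z, ‖h z‖ ≤ 1 := fun z => by
    rw [Real.norm_of_nonneg (Real.exp_pos _).le]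
    refine Real.exp_le_one_iff.2 ?_
    rw [neg_mul, neg_nonpos]
    positivity
  have hi : Integrable h := by
    by_contra hni
    have h1 := GaussianFourier.integral_rexp_neg_mul_sq_norm (V := EuclideanSpace ℝ (Fin 2))
      (b := (2 * τ)⁻¹) (by positivity)
    rw [integral_undef hni] at h1
    exact absurd h1 (by positivity)
  have hev : ∀ z, h (-z) = h z := fun z => by simp [hh]
  set F : EuclideanSpace ℝ (Fin 2) → ℝ := fun z => ∫ y, h (y - z) * f y with hF
  have hprod : Integrable (fun p : EuclideanSpace ℝ (Fin 2) × EuclideanSpace ℝ (Fin 2) =>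
      h (p.1 - p.2) * f p.1) (volume.prod volume) := by
    have h2 : Integrable (fun p : EuclideanSpace ℝ (Fin 2) × EuclideanSpace ℝ (Fin 2) =>
        f p.2 * h (p.1 - p.2)) (volume.prod volume) :=
      hf.convolution_integrand (ContinuousLinearMap.mul ℝ ℝ) hi
    refine h2.swap.congr (ae_of_all _ fun p => ?_)
    simp only [Function.comp, Prod.fst_swap, Prod.snd_swap]
    rw [← hev, neg_sub, mul_comm]
  have hFi : Integrable F := hprod.integral_prod_right
  have hinner : ∀ x, K * gconv (gauss τ) f x = ∫ z, h (x - z) * F z := fun x => by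
    have hix : Integrable (fun z => h (x - z)) := hi.comp_sub_left x
    have hint : Integrable (fun p : EuclideanSpace ℝ (Fin 2) × EuclideanSpace ℝ (Fin 2) =>
        h (p.1 - p.2) * (f p.1 * h (x - p.2))) (volume.prod volume) :=
      (hf.mul_prod hix).bdd_mul (c := 1)
        (hc.comp (by fun_prop)).aestronglyMeasurable (ae_of_all _ fun p => hb _)
    calc K * gconv (gauss τ) f x
        = ∫ y, ∫ z, h (y - z) * (f y * h (x - z)) := by
          unfold gconv
          rw [← integral_const_mul]
          congr 1; ext y
          rw [← mul_assoc, ← hsg x y, ← integral_mul_const]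
          congr 1; ext z; simp only [hh]; ring
      _ = ∫ z, ∫ y, h (y - z) * (f y * h (x - z)) := integral_integral_swap hint
      _ = ∫ z, h (x - z) * F z := by
          congr 1; ext z
          rw [hF, ← integral_const_mul]
          congr 1; ext y; ring
  have hkey : K * gaussB τ f f = ∫ z, F z * F z := by
    have hint : Integrable (fun p : EuclideanSpace ℝ (Fin 2) × EuclideanSpace ℝ (Fin 2) =>
        h (p.1 - p.2) * (f p.1 * F p.2)) (volume.prod volume) :=
      (hf.mul_prod hFi).bdd_mul (c := 1)
        (hc.comp (by fun_prop)).aestronglyMeasurable (ae_of_all _ fun p => hb _)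
    calc K * gaussB τ f f
        = ∫ x, ∫ z, h (x - z) * (f x * F z) := by
          unfold gaussB
          rw [← integral_const_mul]
          congr 1; ext x
          rw [mul_left_comm, hinner, ← integral_const_mul]
          congr 1; ext z; ring
      _ = ∫ z, ∫ x, h (x - z) * (f x * F z) := integral_integral_swap hint
      _ = ∫ z, F z * F z := by
          congr 1; ext z
          conv_rhs => enter [1]; rw [hF]
          rw [← integral_mul_const]
          congr 1; ext x; ring
  have h0 : 0 ≤ K * gaussB τ f f := hkey ▸ integral_nonneg fun z => mul_self_nonneg _
  exact nonneg_of_mul_nonneg_right h0 hK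

/-! ### The relaxed constraint set -/

lemma setIntegral_eq_gaussB {Ω : Set (EuclideanSpace ℝ (Fin 2))} (τ : ℝ)
    {f : EuclideanSpace ℝ (Fin 2) → ℝ} (hf : ∀ x, x ∉ Ω → f x = 0)
    (g : EuclideanSpace ℝ (Fin 2) → ℝ) :
    ∫ x in Ω, f x * gconv (gauss τ) g x = gaussB τ f g :=
  setIntegral_eq_integral_of_forall_compl_eq_zero fun x hx => by simp [hf x hx]

lemma InLambda2.integrable {n : ℕ} {Ω : Set (EuclideanSpace ℝ (Fin 2))}
    (hΩfin : volume Ω ≠ ⊤) {u : Fin n → EuclideanSpace ℝ (Fin 2) → ℝ}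
    (hu : InLambda2 Ω u) (i : Fin n) : Integrable (u i) := by
  have h : IntegrableOn (u i) Ω := by
    refine Measure.integrableOn_of_bounded (M := 1) hΩfin (hu.1 i).aestronglyMeasurable ?_
    filter_upwards [hu.2.2] with x hx
    rw [Real.norm_of_nonneg (hx.1 i).1]
    exact (hx.1 i).2
  exact h.integrable_of_forall_notMem_eq_zero (hu.2.1 i)

lemma InLambda2.integrableOn_mul {n : ℕ} {Ω : Set (EuclideanSpace ℝ (Fin 2))}
    {u : Fin n → EuclideanSpace ℝ (Fin 2) → ℝ}
    (hu : InLambda2 Ω u) (i : Fin n) {e : EuclideanSpace ℝ (Fin 2) → ℝ}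
    (he : IntegrableOn e Ω) : IntegrableOn (fun x => u i x * e x) Ω := by
  refine Integrable.bdd_mul (c := 1) he (hu.1 i).aestronglyMeasurable ?_
  filter_upwards [hu.2.2] with x hx
  rw [Real.norm_of_nonneg (hx.1 i).1]
  exact (hx.1 i).2

lemma InLambda2.sum_sub_ae {n : ℕ} {Ω : Set (EuclideanSpace ℝ (Fin 2))}
    (hΩm : MeasurableSet Ω) {u v : Fin n → EuclideanSpace ℝ (Fin 2) → ℝ}
    (hu : InLambda2 Ω u) (hv : InLambda2 Ω v) :
    (fun x => ∑ i, (v i x - u i x)) =ᵐ[volume] 0 := by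
  filter_upwards [(ae_restrict_iff' hΩm).1 hu.2.2, (ae_restrict_iff' hΩm).1 hv.2.2] with x h1 h2
  by_cases hx : x ∈ Ω
  · simp [Finset.sum_sub_distrib, (h1 hx).2, (h2 hx).2]
  · simp [hu.2.1 _ x hx, hv.2.1 _ x hx]

lemma convex_lambda2 {n : ℕ} (Ω : Set (EuclideanSpace ℝ (Fin 2))) :
    Convex ℝ {w : Fin n → EuclideanSpace ℝ (Fin 2) → ℝ | InLambda2 Ω w} := by
  intro u hu v hv a b ha hb hab
  refine ⟨fun i => ?_, fun i x hx => ?_, ?_⟩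
  · exact ((hu.1 i).const_mul a).add ((hv.1 i).const_mul b)
  · simp [hu.2.1 i x hx, hv.2.1 i x hx]
  · filter_upwards [hu.2.2, hv.2.2] with x h1 h2
    refine ⟨fun i => ?_, ?_⟩
    · exact convex_Icc (0 : ℝ) 1 (h1.1 i) (h2.1 i) ha hb hab
    · simp [Finset.sum_add_distrib, ← Finset.mul_sum, h1.2, h2.2, hab]

/-! ### The energy along a segment -/

/-- The leading coefficient involves only the diagonal terms because `∑ᵢ (vᵢ - uᵢ) = 0` a.e.;
the identity holds on the whole line through `u` and `v`, not only for `t ∈ [0,1]`. -/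
lemma ictmEnergy_segment {n : ℕ} {Ω : Set (EuclideanSpace ℝ (Fin 2))} (hΩm : MeasurableSet Ω)
    (hΩfin : volume Ω ≠ ⊤) {τ : ℝ} (μ : ℝ) (hτ : 0 < τ) (lam : Fin n → ℝ)
    {e : Fin n → EuclideanSpace ℝ (Fin 2) → ℝ} (he_int : ∀ i, IntegrableOn (e i) Ω)
    {u v : Fin n → EuclideanSpace ℝ (Fin 2) → ℝ}
    (hu : InLambda2 Ω u) (hv : InLambda2 Ω v) :
    ∃ a b : ℝ, ∀ t : ℝ,
      ictmEnergy Ω τ μ lam e (fun i x => (1 - t) * u i x + t * v i x) =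
        a + b * t +
          ((-(μ * Real.sqrt (π / τ))) *
            ∑ i, ∫ x in Ω,
              (v i x - u i x) * gconv (gauss τ) (fun y => v i y - u i y) x)
            * t ^ 2 := by
  set w : Fin n → EuclideanSpace ℝ (Fin 2) → ℝ := fun i x => v i x - u i x with hw
  have hui := hu.integrable hΩfin
  have hwi : ∀ i, Integrable (w i) := fun i => (hv.integrable hΩfin i).sub (hui i)
  have hwz : ∀ i x, x ∉ Ω → w i x = 0 := fun i x hx => by
    simp [hw, hu.2.1 i x hx, hv.2.1 i x hx]
  have hlead : ∑ i, ∫ x in Ω, (v i x - u i x) * gconv (gauss τ) (fun y => v i y - u i y) x =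
      ∑ i, gaussB τ (w i) (w i) :=
    Finset.sum_congr rfl fun i _ => setIntegral_eq_gaussB τ (hwz i) (w i)
  -- the full double sum vanishes, so the off-diagonal part is minus the diagonal part
  have hcross : ∑ i, ∑ j ∈ Finset.univ.erase i, gaussB τ (w i) (w j) =
      -∑ i, gaussB τ (w i) (w i) := by
    rw [← Finset.sum_neg_distrib]
    refine Finset.sum_congr rfl fun i _ => ?_
    have h1 := Finset.sum_erase_add Finset.univ (fun j => gaussB τ (w i) (w j))
      (Finset.mem_univ i)
    rw [gaussB_sum_right hτ (hwi i) hwi, gaussB_eq_zero_of_ae τ _ (hu.sum_sub_ae hΩm hv)] at h1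
    linarith
  refine ⟨(∑ i, lam i * ∫ x in Ω, u i x * e i x) + μ * Real.sqrt (π / τ) *
      ∑ i, ∑ j ∈ Finset.univ.erase i, gaussB τ (u i) (u j),
    (∑ i, lam i * ∫ x in Ω, w i x * e i x) + μ * Real.sqrt (π / τ) *
      ∑ i, ∑ j ∈ Finset.univ.erase i, (gaussB τ (u i) (w j) + gaussB τ (w i) (u j)),
    fun t => ?_⟩
  have hseg : (fun i x => (1 - t) * u i x + t * v i x) = fun i x => u i x + t * w i x := by
    funext i x; simp only [hw]; ring
  have hlin : ∀ i, ∫ x in Ω, (u i x + t * w i x) * e i x =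
      (∫ x in Ω, u i x * e i x) + t * ∫ x in Ω, w i x * e i x := fun i => by
    have h1 := hu.integrableOn_mul i (he_int i)
    have h2 : IntegrableOn (fun x => w i x * e i x) Ω := by
      refine ((hv.integrableOn_mul i (he_int i)).sub h1).congr (ae_of_all _ fun x => ?_)
      simp only [hw, Pi.sub_apply]; ring
    rw [← integral_const_mul, ← integral_add h1 (h2.const_mul t)]
    congr 1; ext x; ring
  have hquad : ∀ i j, ∫ x in Ω, (u i x + t * w i x) *
        gconv (gauss τ) (fun x => u j x + t * w j x) x =
      gaussB τ (u i) (u j) + t * (gaussB τ (u i) (w j) + gaussB τ (w i) (u j)) +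
        t ^ 2 * gaussB τ (w i) (w j) := fun i j => by
    rw [setIntegral_eq_gaussB τ (f := fun x => u i x + t * w i x)
        (fun x hx => by simp [hu.2.1 i x hx, hwz i x hx]),
      gaussB_add_smul_left hτ (k := fun x => u j x + t * w j x) (hui i) (hwi i)
        ((hui j).add ((hwi j).const_mul t)),
      gaussB_add_smul_right hτ (hui i) (hui j) (hwi j),
      gaussB_add_smul_right hτ (hwi i) (hui j) (hwi j)]
    ring
  rw [hlead, hseg]
  unfold ictmEnergy
  simp_rw [hlin, hquad, Finset.sum_add_distrib, ← Finset.mul_sum, Finset.sum_add_distrib,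
    hcross, mul_add, Finset.sum_add_distrib, mul_left_comm _ t, ← Finset.mul_sum]
  ring

/-- **Concavity of the ICTM energy on the relaxed constraint set `Λ₂`.**
For `u, v ∈ Λ₂`, `t ↦ E((1-t)u + t v)` is a quadratic polynomial in `t` with
leading coefficient `-μ √(π/τ) ∑ᵢ ∫_Ω (vᵢ-uᵢ)(G_τ*(vᵢ-uᵢ)) ≤ 0`, hence concave on
`[0,1]`; in particular `E` is concave on the convex set `Λ₂`. -/
theorem ictm_energy_concave {n : ℕ} (hn : 2 ≤ n)
    (Ω : Set (EuclideanSpace ℝ (Fin 2))) (hΩm : MeasurableSet Ω)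
    (hΩb : Bornology.IsBounded Ω) (hΩpos : 0 < volume Ω) (hΩfin : volume Ω ≠ ⊤)
    (τ μ : ℝ) (hτ : 0 < τ) (hμ : 0 < μ)
    (lam : Fin n → ℝ) (hlam : ∀ i, 0 < lam i)
    (e : Fin n → EuclideanSpace ℝ (Fin 2) → ℝ)
    (he_meas : ∀ i, Measurable (e i))
    (he_int : ∀ i, IntegrableOn (e i) Ω)
    (he_nonneg : ∀ i x, 0 ≤ e i x)
    (u v : Fin n → EuclideanSpace ℝ (Fin 2) → ℝ)
    (hu : InLambda2 Ω u) (hv : InLambda2 Ω v) :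
    (∃ a b : ℝ, ∀ t : ℝ,
      ictmEnergy Ω τ μ lam e (fun i x => (1 - t) * u i x + t * v i x) =
        a + b * t +
          ((-(μ * Real.sqrt (π / τ))) *
            ∑ i, ∫ x in Ω,
              (v i x - u i x) * gconv (gauss τ) (fun y => v i y - u i y) x)
            * t ^ 2) ∧
    ((-(μ * Real.sqrt (π / τ))) *
        (∑ i, ∫ x in Ω,
          (v i x - u i x) * gconv (gauss τ) (fun y => v i y - u i y) x) ≤ 0) ∧
    ConcaveOn ℝ (Set.Icc (0 : ℝ) 1)
      (fun t => ictmEnergy Ω τ μ lam e (fun i x => (1 - t) * u i x + t * v i x)) ∧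
    ConcaveOn ℝ {w : Fin n → EuclideanSpace ℝ (Fin 2) → ℝ | InLambda2 Ω w}
      (ictmEnergy Ω τ μ lam e) := by
  have hle : ∀ {u v : Fin n → EuclideanSpace ℝ (Fin 2) → ℝ}, InLambda2 Ω u → InLambda2 Ω v →
      (-(μ * Real.sqrt (π / τ))) *
        (∑ i, ∫ x in Ω,
          (v i x - u i x) * gconv (gauss τ) (fun y => v i y - u i y) x) ≤ 0 := by
    intro u v hu hv
    refine mul_nonpos_of_nonpos_of_nonneg (neg_nonpos.2 (by positivity))
      (Finset.sum_nonneg fun i _ => ?_)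
    rw [setIntegral_eq_gaussB τ (f := fun x => v i x - u i x)
      (fun x hx => by simp [hu.2.1 i x hx, hv.2.1 i x hx])]
    exact gaussB_self_nonneg hτ ((hv.integrable hΩfin i).sub (hu.integrable hΩfin i))
  refine ⟨ictmEnergy_segment hΩm hΩfin μ hτ lam he_int hu hv, hle hu hv, ?_, ?_⟩
  · obtain ⟨a, b, h⟩ := ictmEnergy_segment hΩm hΩfin μ hτ lam he_int hu hv
    refine ⟨convex_Icc 0 1, fun s _ r _ p q hp hq hpq => ?_⟩
    have hC := hle hu hv
    simp only [h, smul_eq_mul]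
    generalize (-(μ * Real.sqrt (π / τ))) * (∑ i, ∫ x in Ω,
          (v i x - u i x) * gconv (gauss τ) (fun y => v i y - u i y) x) = C at hC
    obtain rfl : p = 1 - q := by linarith
    -- the concavity defect of `C t²` is `-C p q (s - r)²`
    have h1 : 0 ≤ (-C) * ((1 - q) * q * (s - r) ^ 2) :=
      mul_nonneg (by linarith) (by positivity)
    nlinarith
  · refine ⟨convex_lambda2 Ω, fun x hx y hy p q hp hq hpq => ?_⟩
    obtain ⟨a, b, h⟩ := ictmEnergy_segment hΩm hΩfin μ hτ lam he_int hx hy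
    have hC := hle hx hy
    obtain rfl : p = 1 - q := by linarith
    have h0 := h 0
    have h1 := h 1
    have hq' : ictmEnergy Ω τ μ lam e ((1 - q) • x + q • y) = _ := h q
    simp only [sub_zero, one_mul, zero_mul, add_zero, sub_self, zero_add] at h0 h1
    rw [hq', smul_eq_mul, smul_eq_mul, show ictmEnergy Ω τ μ lam e x = _ from h0,
      show ictmEnergy Ω τ μ lam e y = _ from h1]
    generalize (-(μ * Real.sqrt (π / τ))) * (∑ i, ∫ z in Ω,
          (y i z - x i z) * gconv (gauss τ) (fun s => y i s - x i s) z) = C at hC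
    have h2 : 0 ≤ (-C) * ((1 - q) * q) := mul_nonneg (by linarith) (by positivity)
    nlinarith
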